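/- Let 𝒪 be a polynomial ring over a field k of characteristic zero, 𝔥 ⊆ 𝔤 ideals with 𝔥 unmixed and 𝔤 a radical ideal generated by an 𝒪-regular sequence g₁,…,g_n, and assume the localization of 𝒪/𝔥 at (the image of) every minimal prime of 𝔤 is a regular local ring. Suppose for some 0 ≤ t ≤ n: (1) the images of g₁,…,g_t in the conormal module M = 𝔤/(𝔤²+𝔥) lie in the torsion T(M); (2) for every associated prime 𝔭 of 𝒪/𝔤, the images of g_{t+1},…,g_n in (𝒪/𝔥)_𝔭̄ generate (𝔤/𝔥)_𝔭̄ and form a regular sequence there (i.e. generate it as a complete intersection ideal). Then ∫_𝔥 𝔤 = (g₁,…,g_t) + (g_{t+1},…,g_n)². -/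

import Mathlib

open Ideal

/-- `ξ ∈ Der_h(O)`: the derivation `ξ` preserves the ideal `h`. -/
def PreservesIdeal {k O : Type*} [CommRing k] [CommRing O] [Algebra k O]
    (h : Ideal O) (xi : Derivation k O O) : Prop :=
  ∀ x ∈ h, xi x ∈ h

/-- The primitive ideal `∫_h g` of `g` relative to `h`: all `f ∈ g` such that
`ξ f ∈ g` for every derivation `ξ` preserving `h`. -/
def primitiveIdeal (k : Type*) {O : Type*} [CommRing k] [CommRing O] [Algebra k O]
    (h g : Ideal O) : Ideal O where
  carrier := {f | f ∈ g ∧ ∀ xi : Derivation k O O, PreservesIdeal h xi → xi f ∈ g}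
  add_mem' := fun {a b} ha hb =>
    ⟨g.add_mem ha.1 hb.1, fun xi hxi => by
      rw [map_add]; exact g.add_mem (ha.2 xi hxi) (hb.2 xi hxi)⟩
  zero_mem' := ⟨g.zero_mem, fun xi _ => by simp⟩
  smul_mem' := fun c f hf =>
    ⟨g.smul_mem c hf.1, fun xi hxi => by
      rw [smul_eq_mul, Derivation.leibniz]
      exact g.add_mem (g.smul_mem _ (hf.2 xi hxi))
        (by rw [smul_eq_mul]; exact Ideal.mul_mem_right _ g hf.1)⟩

/-- The set of elements of `g` whose class in the conormal module `M = g/(g² + h)` is a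
torsion element over `O/g`, i.e. is killed by a non-zero-divisor of `O/g`.  This is the
preimage in `O` of the torsion submodule `T(M)` of `M`. -/
def torsionSet {O : Type*} [CommRing O] (h g : Ideal O) : Set O :=
  {f | f ∈ g ∧ ∃ β : O,
    Ideal.Quotient.mk g β ∈ nonZeroDivisors (O ⧸ g) ∧ β * f ∈ g ^ 2 ⊔ h}

/-- An ideal is unmixed (has no embedded primes): every associated prime of `O/I` is a
minimal prime of `I`. -/
def IsUnmixed {O : Type*} [CommRing O] (I : Ideal O) : Prop :=
  associatedPrimes O (O ⧸ I) ⊆ I.minimalPrimes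

/-- A regular local ring: a noetherian local ring whose maximal ideal can be generated by
Krull-dimension many elements. -/
def IsRegularLocal (R : Type*) [CommRing R] : Prop :=
  IsNoetherianRing R ∧ IsLocalRing R ∧ ∃ s : Finset R,
    (Ideal.span (s : Set R)).IsMaximal ∧ (s.card : WithBot ℕ∞) = ringKrullDim R

/-- The localization of `R` at a prime ideal (with the primality assumption explicit). -/
abbrev locAt {R : Type*} [CommRing R] (q : Ideal R) (hq : q.IsPrime) : Type _ :=
  @Localization.AtPrime R _ q hq

/-- The localization of `O/h` at the image of the prime `p` is a regular local ring. -/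
def regularAtImage {O : Type*} [CommRing O] (h p : Ideal O) : Prop :=
  ∀ hP : (p.map (Ideal.Quotient.mk h)).IsPrime,
    IsRegularLocal (locAt (p.map (Ideal.Quotient.mk h)) hP)

/-- The `(t+1)`-st through `n`-th members `g_{t+1}, …, g_n` of a family `g_1, …, g_n`. -/
def tailFam {O : Type*} {n : ℕ} (gs : Fin n → O) (t : ℕ) (j : Fin (n - t)) : O :=
  gs ⟨t + (j : ℕ), by have := j.isLt; omega⟩

/-- The images of `g_{t+1}, …, g_n` in the localization of `O/h` at the image of the
prime `p` form a regular sequence and generate the localization of `g/h` there, i.e. they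
generate it as a complete intersection ideal. -/
def generatesAsCI {O : Type*} [CommRing O] (h g : Ideal O) {n : ℕ}
    (gs : Fin n → O) (t : ℕ) (p : Ideal O) : Prop :=
  ∀ hP : (p.map (Ideal.Quotient.mk h)).IsPrime,
    RingTheory.Sequence.IsRegular (locAt (p.map (Ideal.Quotient.mk h)) hP)
      (List.ofFn fun j : Fin (n - t) =>
        algebraMap (O ⧸ h) (locAt (p.map (Ideal.Quotient.mk h)) hP)
          (Ideal.Quotient.mk h (tailFam gs t j))) ∧
    Ideal.span (Set.range fun j : Fin (n - t) =>
        algebraMap (O ⧸ h) (locAt (p.map (Ideal.Quotient.mk h)) hP)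
          (Ideal.Quotient.mk h (tailFam gs t j))) =
      (g.map (Ideal.Quotient.mk h)).map
        (algebraMap (O ⧸ h) (locAt (p.map (Ideal.Quotient.mk h)) hP))

section
open IsLocalRing

/-- The conormal sequence of the residue field splits: the identity of the cotangent space of a
local algebra with formally smooth residue field extends to a derivation. -/
theorem exists_derivation_eq_toCotangent (k A : Type*) [CommRing k] [CommRing A]
    [IsLocalRing A] [Algebra k A] [Algebra.FormallySmooth k (ResidueField A)] :
    ∃ d : Derivation k A (CotangentSpace A),
      ∀ x : maximalIdeal A, d x = (maximalIdeal A).toCotangent x := by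
  let m := maximalIdeal A
  let B := A ⧸ m ^ 2
  let q : B →ₐ[k] ResidueField A :=
    Ideal.Quotient.liftₐ (m ^ 2) (IsScalarTower.toAlgHom k A (ResidueField A)) fun a ha => by
      have : a ∈ m := Ideal.pow_le_self two_ne_zero ha
      exact (residue_eq_zero_iff a).2 this
  have hq (a : A) : q (Ideal.Quotient.mk _ a) = residue A a := rfl
  have hqs : Function.Surjective q := fun y => by
    obtain ⟨a, rfl⟩ := residue_surjective y
    exact ⟨Ideal.Quotient.mk _ a, rfl⟩
  have hker : RingHom.ker (q : B →+* ResidueField A) = m.cotangentIdeal := by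
    ext b
    obtain ⟨a, rfl⟩ := Ideal.Quotient.mk_surjective b
    rw [Ideal.mk_mem_cotangentIdeal, RingHom.mem_ker]
    exact (residue_eq_zero_iff a)
  have hnil : m.cotangentIdeal ^ 2 = ⊥ := m.cotangentIdeal_square
  let s : ResidueField A →ₐ[k] B := Algebra.FormallySmooth.liftOfSurjective
    (AlgHom.id k (ResidueField A)) q hqs (by rw [hker]; exact ⟨2, hnil⟩)
  have hs (y) : q (s y) = y := Algebra.FormallySmooth.liftOfSurjective_apply _ q hqs _ y
  let e : Derivation k A m.cotangentIdeal :=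
    derivationToSquareZeroOfLift m.cotangentIdeal hnil
      (s.comp (IsScalarTower.toAlgHom k A (ResidueField A))) (by
        ext a
        change Ideal.Quotient.mk _ (s (residue A a)) = Ideal.Quotient.mk _ (Ideal.Quotient.mk _ a)
        rw [Ideal.Quotient.eq, ← hker, RingHom.mem_ker, map_sub]
        change q (s (residue A a)) - residue A a = 0
        rw [hs, sub_self])
  refine ⟨-(m.cotangentEquivIdeal.symm.toLinearMap.compDer e), fun x => ?_⟩
  rw [Derivation.neg_apply, neg_eq_iff_eq_neg]
  change m.cotangentEquivIdeal.symm (e x) = _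
  rw [LinearEquiv.symm_apply_eq, map_neg]
  ext
  change s (residue A x) - Ideal.Quotient.mk _ (x : A) = - Ideal.Quotient.mk _ (x : A)
  rw [(residue_eq_zero_iff (x : A)).2 x.2, map_zero, zero_sub]

/-- Every linear functional on the cotangent space of `A` is induced by a derivation from a
polynomial ring to `A`. -/
theorem MvPolynomial.exists_derivation_residue_eq {k σ A : Type*} [CommRing k]
    [CommRing A] [IsLocalRing A] [Algebra k A] [Algebra (MvPolynomial σ k) A]
    [IsScalarTower k (MvPolynomial σ k) A] [Algebra.FormallySmooth k (ResidueField A)]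
    (l : CotangentSpace A →ₗ[ResidueField A] ResidueField A) :
    ∃ D : Derivation k (MvPolynomial σ k) A, ∀ (x : MvPolynomial σ k)
      (hx : algebraMap _ A x ∈ maximalIdeal A),
      residue A (D x) = l ((maximalIdeal A).toCotangent ⟨_, hx⟩) := by
  obtain ⟨d, hd⟩ := exists_derivation_eq_toCotangent k A
  let E : Derivation k (MvPolynomial σ k) (ResidueField A) :=
    ((l.restrictScalars A).compDer d).compAlgebraMap (MvPolynomial σ k)
  have hE (x) : E x = l (d (algebraMap _ A x)) := rfl
  choose v hv using fun i => residue_surjective (R := A) (E (X i))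
  let D := mkDerivation k v
  have hD : (IsScalarTower.toAlgHom (MvPolynomial σ k) A (ResidueField A)).toLinearMap.compDer D
      = E := by
    refine MvPolynomial.derivation_ext fun i => ?_
    simpa [D, mkDerivation_X] using hv i
  refine ⟨D, fun x hx => ?_⟩
  rw [← hd ⟨_, hx⟩, ← hE, ← hD]
  rfl

/-- If the `u i` have linearly independent classes in the cotangent space and the class of `f` is
not in their span, then some derivation kills all `u i` and maps `f` to a unit. -/
theorem MvPolynomial.exists_derivation_eq_zero {k σ A : Type*} [CommRing k]
    [CommRing A] [IsLocalRing A] [Algebra k A] [Algebra (MvPolynomial σ k) A]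
    [IsScalarTower k (MvPolynomial σ k) A] [Algebra.FormallySmooth k (ResidueField A)]
    {ι : Type*} [Finite ι] (u : ι → MvPolynomial σ k)
    (hu : ∀ i, algebraMap _ A (u i) ∈ maximalIdeal A)
    (hli : LinearIndependent (ResidueField A)
      fun i => (maximalIdeal A).toCotangent ⟨_, hu i⟩)
    (f : MvPolynomial σ k) (hf : algebraMap _ A f ∈ maximalIdeal A)
    (hfu : (maximalIdeal A).toCotangent ⟨_, hf⟩ ∉ Submodule.span (ResidueField A)
      (Set.range fun i => (maximalIdeal A).toCotangent ⟨_, hu i⟩)) :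
    ∃ D : Derivation k (MvPolynomial σ k) A,
      (∀ i, D (u i) = 0) ∧ D f ∉ maximalIdeal A := by
  classical
  cases nonempty_fintype ι
  let c : ι → CotangentSpace A := fun i => (maximalIdeal A).toCotangent ⟨_, hu i⟩
  have dual (i : ι) : ∃ D : Derivation k (MvPolynomial σ k) A, ∀ j,
      residue A (D (u j)) = if j = i then 1 else 0 := by
    obtain ⟨l, hl⟩ : ∃ l : CotangentSpace A →ₗ[ResidueField A] ResidueField A, ∀ j,
        l (c j) = if j = i then 1 else 0 := by
      obtain ⟨r, hr⟩ := LinearMap.exists_leftInverse_of_injective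
        (Finsupp.linearCombination (ResidueField A) c) (LinearMap.ker_eq_bot.2 hli)
      refine ⟨(Finsupp.lapply i).comp r, fun j => ?_⟩
      have := LinearMap.congr_fun hr (Finsupp.single j 1)
      rw [LinearMap.comp_apply, Finsupp.linearCombination_single, one_smul] at this
      simp [this, Finsupp.single_apply]
    obtain ⟨D, hD⟩ := MvPolynomial.exists_derivation_residue_eq (σ := σ) (k := k) l
    exact ⟨D, fun j => (hD _ (hu j)).trans (hl j)⟩
  choose E hE using dual
  obtain ⟨l, hlf, hl⟩ : ∃ l : CotangentSpace A →ₗ[ResidueField A] ResidueField A,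
      l ((maximalIdeal A).toCotangent ⟨_, hf⟩) ≠ 0 ∧ ∀ j, l (c j) = 0 := by
    obtain ⟨l, hl1, hl2⟩ := Submodule.exists_le_ker_of_notMem hfu
    exact ⟨l, hl1, fun j => hl2 (Submodule.subset_span ⟨j, rfl⟩)⟩
  obtain ⟨D₀, hD₀⟩ := MvPolynomial.exists_derivation_residue_eq (σ := σ) (k := k) l
  let N : Matrix ι ι A := Matrix.of fun i j => E i (u j)
  have hN : IsUnit N.det := by
    rw [← isUnit_map_iff (residue A), RingHom.map_det]
    have : (residue A).mapMatrix N = 1 := by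
      ext i j
      simp [N, hE, Matrix.one_apply, eq_comm]
    rw [this, Matrix.det_one]
    exact isUnit_one
  let w : ι → A := fun j => D₀ (u j)
  let a : ι → A := Matrix.vecMul w N⁻¹
  have haN : Matrix.vecMul a N = w := by
    simp [a, Matrix.vecMul_vecMul, Matrix.nonsing_inv_mul _ hN]
  have hw (j) : w j ∈ maximalIdeal A :=
    (residue_eq_zero_iff _).1 ((hD₀ _ (hu j)).trans (hl j))
  have ha (i) : a i ∈ maximalIdeal A :=
    Ideal.sum_mem _ fun j _ => Ideal.mul_mem_right _ _ (hw j)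
  have hsum (x) : (∑ i, a i • E i) x = ∑ i, a i * E i x := by
    change Derivation.coeFnAddMonoidHom (∑ i, a i • E i) x = _
    rw [map_sum, Finset.sum_apply]
    rfl
  refine ⟨D₀ - ∑ i, a i • E i, fun j => ?_, fun hmem => hlf ?_⟩
  · have := congrFun haN j
    simp only [Matrix.vecMul, dotProduct, N, Matrix.of_apply, w] at this
    rw [Derivation.sub_apply, hsum, this, sub_self]
  · rw [← hD₀ _ hf, residue_eq_zero_iff]
    have hmem' : (∑ i, a i • E i) f ∈ maximalIdeal A := by
      rw [hsum]
      exact Ideal.sum_mem _ fun i _ => Ideal.mul_mem_right _ _ (ha i)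
    simpa using add_mem hmem hmem'
end

open scoped Pointwise in
/-- If the maximal ideal is generated by an ideal `U` inside the kernel of a surjection `A → M`
together with a weakly `M`-regular sequence, then `U` is the whole kernel. -/
theorem ker_le_of_isWeaklyRegular {A : Type*} [CommRing A] [IsLocalRing A] [IsNoetherianRing A]
    (ys : List A) (hymem : ∀ y ∈ ys, y ∈ IsLocalRing.maximalIdeal A)
    {M : Type*} [AddCommGroup M] [Module A M] (π : A →ₗ[A] M)
    (hπ : Function.Surjective π) (hker : LinearMap.ker π ≤ IsLocalRing.maximalIdeal A)
    (hreg : RingTheory.Sequence.IsWeaklyRegular M ys)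
    (U : Ideal A) (hU : U ≤ LinearMap.ker π)
    (hm : IsLocalRing.maximalIdeal A ≤ U ⊔ Ideal.ofList ys) : LinearMap.ker π ≤ U := by
  induction ys generalizing M U with
  | nil => exact hker.trans (by simpa using hm)
  | cons y ys ih =>
    obtain ⟨hy, hys⟩ := (RingTheory.Sequence.isWeaklyRegular_cons_iff M y ys).1 hreg
    have hyA : y ∈ IsLocalRing.maximalIdeal A := hymem y (by simp)
    have hker' : LinearMap.ker ((Submodule.mkQ (y • (⊤ : Submodule A M))).comp π) =
        LinearMap.ker π ⊔ Ideal.span {y} := by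
      ext a
      simp only [LinearMap.mem_ker, LinearMap.comp_apply, Submodule.mkQ_apply,
        Submodule.Quotient.mk_eq_zero, Submodule.mem_smul_pointwise_iff_exists,
        Submodule.mem_sup, Submodule.mem_top, true_and, Ideal.mem_span_singleton']
      constructor
      · rintro ⟨x, hx⟩
        obtain ⟨b, rfl⟩ := hπ x
        refine ⟨a - b * y, ?_, b * y, ⟨b, rfl⟩, by ring⟩
        rw [map_sub, ← hx, mul_comm, ← smul_eq_mul, map_smul, sub_self]
      · rintro ⟨c, hc, _, ⟨b, rfl⟩, rfl⟩
        exact ⟨π b, by rw [map_add, hc, zero_add, mul_comm, ← smul_eq_mul, map_smul]⟩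
    have hspan : Ideal.span {y} ≤ IsLocalRing.maximalIdeal A := by
      rwa [Ideal.span_le, Set.singleton_subset_iff]
    have key := ih (fun z hz => hymem z (by simp [hz]))
      ((Submodule.mkQ _).comp π) ((Submodule.mkQ_surjective _).comp hπ)
      (hker'.trans_le (sup_le hker hspan)) hys (U ⊔ Ideal.span {y})
      ((sup_le_sup_right hU _).trans_eq hker'.symm) (by rwa [Ideal.ofList_cons, ← sup_assoc] at hm)
    refine Submodule.le_of_le_smul_of_le_jacobson_bot (IsNoetherian.noetherian _)
      (IsLocalRing.maximalIdeal_le_jacobson ⊥) fun a ha => ?_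
    obtain ⟨b, hb, c, hc, rfl⟩ := Submodule.mem_sup.1 (key (LinearMap.ker_le_ker_comp _ _ ha))
    obtain ⟨c, rfl⟩ := Ideal.mem_span_singleton'.1 hc
    refine Submodule.add_mem_sup hb ?_
    rw [mul_comm]
    refine Submodule.smul_mem_smul hyA (LinearMap.mem_ker.2 (hy ?_))
    have h0 : π (y • c) = 0 := by
      have := LinearMap.mem_ker.1 ha
      rwa [map_add, LinearMap.mem_ker.1 (hU hb), zero_add, mul_comm] at this
    simpa only [map_smul, smul_zero] using h0

/-- The coefficients of a linear relation on a regular sequence lie in the ideal it generates. -/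
theorem mem_span_of_sum_mul_eq_zero {S : Type*} [CommRing S] {n : ℕ} (y : Fin n → S)
    (hy : ∀ i c, y i * c ∈ Ideal.span (y '' Set.Iio i) → c ∈ Ideal.span (y '' Set.Iio i))
    (a : Fin n → S) (ha : ∑ i, a i * y i = 0) (i : Fin n) : a i ∈ Ideal.span (Set.range y) := by
  induction n with
  | zero => exact i.elim0
  | succ n ih =>
    let z : Fin n → S := fun i => y i.castSucc
    have himg (i : Fin n) : y '' Set.Iio i.castSucc = z '' Set.Iio i := by
      ext x
      constructor
      · rintro ⟨j, hj, rfl⟩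
        have hj : (j : ℕ) < i := hj
        exact ⟨⟨j, by omega⟩, hj, rfl⟩
      · rintro ⟨j, hj, rfl⟩
        exact ⟨j.castSucc, hj, rfl⟩
    have hlast : y '' Set.Iio (Fin.last n) = Set.range z := by
      ext x
      constructor
      · rintro ⟨j, hj, rfl⟩
        exact ⟨⟨j, hj⟩, rfl⟩
      · rintro ⟨j, rfl⟩
        exact ⟨j.castSucc, j.2, rfl⟩
    have hz : Ideal.span (Set.range z) ≤ Ideal.span (Set.range y) :=
      Ideal.span_mono (Set.range_comp_subset_range Fin.castSucc y)
    rw [Fin.sum_univ_castSucc] at ha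
    have hl : a (Fin.last n) ∈ Ideal.span (Set.range z) := by
      rw [← hlast]
      refine hy _ _ ?_
      rw [hlast, mul_comm, ← neg_eq_of_add_eq_zero_right ha]
      exact neg_mem (Ideal.sum_mem _ fun i _ => Ideal.mul_mem_left _ _ (Ideal.subset_span ⟨i, rfl⟩))
    induction i using Fin.lastCases with
    | last => exact hz hl
    | cast i =>
      obtain ⟨c, hc⟩ := (Ideal.mem_span_range_iff_exists_fun).1 hl
      have := ih z (fun i => by rw [← himg]; exact hy _)
        (fun i => a i.castSucc + c i * y (Fin.last n)) (by
          rw [← hc, Finset.sum_mul] at ha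
          rw [← ha, ← Finset.sum_add_distrib]
          exact Finset.sum_congr rfl fun i _ => by simp only [z]; ring) i
      rw [← add_sub_cancel_right (a i.castSucc) (c i * y (Fin.last n))]
      exact sub_mem (hz this) (Ideal.mul_mem_left _ _ (Ideal.subset_span ⟨_, rfl⟩))

theorem mem_span_of_isWeaklyRegular {S : Type*} [CommRing S] {n : ℕ} (y : Fin n → S)
    (hy : RingTheory.Sequence.IsWeaklyRegular S (List.ofFn y)) (i : Fin n) (c : S)
    (hc : y i * c ∈ Ideal.span (y '' Set.Iio i)) : c ∈ Ideal.span (y '' Set.Iio i) := by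
  have h := hy.regular_mod_prev i (by simp)
  have hl : Ideal.ofList ((List.ofFn y).take i) = Ideal.span (y '' Set.Iio i) := by
    refine congrArg Ideal.span (Set.ext fun x => ?_)
    simp only [List.mem_take_iff_getElem, Set.mem_ofPred_eq, Set.mem_image, Set.mem_Iio]
    constructor
    · rintro ⟨j, hj, rfl⟩
      have hj' := lt_min_iff.1 hj
      exact ⟨⟨j, by simpa using hj'.2⟩, hj'.1, by simp⟩
    · rintro ⟨j, hj, rfl⟩
      exact ⟨j, by simpa using hj, by simp⟩
  rw [isSMulRegular_quotient_iff_mem_of_smul_mem] at h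
  simp only [hl, smul_eq_mul, Ideal.mul_top, List.getElem_ofFn, Fin.eta] at h
  exact h c hc

section
open IsLocalRing

/-- If every vector of `s` is the class of an element of the ideal `J`, so is every vector of its
span over the residue field. -/
theorem exists_mem_toCotangent_eq_of_mem_span {A : Type*} [CommRing A] [IsLocalRing A]
    (J : Ideal A) (s : Set (CotangentSpace A))
    (hs : ∀ v ∈ s, ∃ x : maximalIdeal A, (x : A) ∈ J ∧ (maximalIdeal A).toCotangent x = v)
    (v : CotangentSpace A) (hv : v ∈ Submodule.span (ResidueField A) s) :
    ∃ x : maximalIdeal A, (x : A) ∈ J ∧ (maximalIdeal A).toCotangent x = v := by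
  induction hv using Submodule.span_induction with
  | mem v hv => exact hs v hv
  | zero => exact ⟨0, J.zero_mem, map_zero _⟩
  | add v w _ _ hv hw =>
    obtain ⟨x, hx, rfl⟩ := hv
    obtain ⟨y, hy, rfl⟩ := hw
    exact ⟨x + y, J.add_mem hx hy, map_add _ _ _⟩
  | smul c v _ hv =>
    obtain ⟨x, hx, rfl⟩ := hv
    obtain ⟨a, rfl⟩ := residue_surjective c
    refine ⟨a • x, J.mul_mem_left a hx, ?_⟩
    rw [map_smul, ← ResidueField.algebraMap_eq, algebraMap_smul]

/-- A regular sequence generating the maximal ideal is linearly independent in the cotangent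
space. -/
theorem mem_maximalIdeal_of_sum_mul_mem_sq {S : Type*} [CommRing S] [IsLocalRing S]
    {r : ℕ} (y : Fin r → S) (hyreg : RingTheory.Sequence.IsWeaklyRegular S (List.ofFn y))
    (hspan : Ideal.span (Set.range y) = maximalIdeal S) (a : Fin r → S)
    (ha : ∑ i, a i * y i ∈ maximalIdeal S ^ 2) (i : Fin r) : a i ∈ maximalIdeal S := by
  rw [pow_two, ← smul_eq_mul] at ha
  nth_rw 2 [← hspan] at ha
  obtain ⟨b, hb, hsum⟩ := (Submodule.mem_ideal_smul_span_iff_exists_sum _ _ _).1 ha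
  rw [Finsupp.sum_fintype _ _ (by simp)] at hsum
  have := mem_span_of_sum_mul_eq_zero y (mem_span_of_isWeaklyRegular y hyreg) (fun i => a i - b i)
    (by simp_all [sub_mul, Finset.sum_sub_distrib]) i
  rw [hspan] at this
  simpa using add_mem this (hb i)

/-- A derivation into a localization at a prime `p` which maps `h` into the extension of `h`
becomes, after multiplication by an element outside `p`, a derivation preserving `h`. -/
theorem MvPolynomial.exists_preservesIdeal {k σ A : Type*} [CommRing k] [IsNoetherianRing k]
    [Finite σ] [CommRing A]
    [Algebra k A] [Algebra (MvPolynomial σ k) A] [IsScalarTower k (MvPolynomial σ k) A]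
    (p : Ideal (MvPolynomial σ k)) [p.IsPrime] [IsLocalization.AtPrime A p]
    (h : Ideal (MvPolynomial σ k)) (D : Derivation k (MvPolynomial σ k) A)
    (hD : ∀ x ∈ h, D x ∈ h.map (algebraMap _ A)) :
    ∃ ξ : Derivation k (MvPolynomial σ k) (MvPolynomial σ k), PreservesIdeal h ξ ∧
      ∃ s ∉ p, ∀ x, algebraMap _ A (ξ x) = algebraMap _ A s * D x := by
  classical
  obtain ⟨s, hs⟩ := IsLocalization.exist_integer_multiples_of_finite p.primeCompl
    fun i : σ => D (X i)
  choose w hw using hs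
  let E := mkDerivation k w
  have hE (x) : algebraMap _ A (E x) = algebraMap _ A (s : MvPolynomial σ k) * D x := by
    have : (Algebra.linearMap (MvPolynomial σ k) A).compDer E = (s : MvPolynomial σ k) • D := by
      refine MvPolynomial.derivation_ext fun i => ?_
      simpa [E, mkDerivation_X] using hw i
    simpa [Algebra.smul_def] using Derivation.congr_fun this x
  have hclear (x) (hx : x ∈ h) : ∃ s ∉ p, s * E x ∈ h := by
    have : algebraMap _ A (E x) ∈ h.map (algebraMap _ A) := by
      rw [hE]
      exact Ideal.mul_mem_left _ _ (hD x hx)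
    exact (IsLocalization.algebraMap_mem_map_algebraMap_iff p.primeCompl A h _).1 this
  obtain ⟨T, hT⟩ := (isNoetherianRing_iff_ideal_fg _).1 inferInstance h
  have hTh : ∀ x ∈ T, x ∈ h := fun x hx => hT ▸ Ideal.subset_span hx
  choose! c hcp hc using hclear
  refine ⟨(∏ x ∈ T, c x) • E, fun x hx => ?_, (∏ x ∈ T, c x) * s, ?_, fun x => ?_⟩
  · rw [← hT] at hx
    change x ∈ Submodule.span _ _ at hx
    induction hx using Submodule.span_induction with
    | mem x hx =>
      have hx : x ∈ T := hx
      rw [Derivation.smul_apply, smul_eq_mul, ← Finset.mul_prod_erase T c hx, mul_right_comm]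
      exact Ideal.mul_mem_right _ _ (hc x (hTh x hx))
    | zero => simp
    | add x y _ _ hx hy => rw [map_add]; exact h.add_mem hx hy
    | smul a x hx' hx =>
      rw [smul_eq_mul, Derivation.leibniz]
      exact h.add_mem (h.smul_mem _ hx) (Ideal.mul_mem_right _ _ (hT ▸ hx'))
  · intro hmem
    rcases Ideal.IsPrime.mem_or_mem ‹_› hmem with hmem | hmem
    · obtain ⟨x, hx, hxp⟩ := (Ideal.IsPrime.prod_mem_iff (p := p)).1 hmem
      exact hcp x (hTh x hx) hxp
    · exact s.2 hmem
  · rw [Derivation.smul_apply, smul_eq_mul, map_mul, map_mul, hE, mul_assoc]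

theorem MvPolynomial.derivation_mem_map_of_mem_map_span {k σ A ι : Type*} [CommRing k] [CommRing A]
    [Algebra k A] [Algebra (MvPolynomial σ k) A] [IsScalarTower k (MvPolynomial σ k) A]
    (p : Ideal (MvPolynomial σ k)) [p.IsPrime] [IsLocalization.AtPrime A p]
    (u : ι → MvPolynomial σ k) (D : Derivation k (MvPolynomial σ k) A) (hD : ∀ i, D (u i) = 0)
    (x : MvPolynomial σ k)
    (hx : algebraMap _ A x ∈ (Ideal.span (Set.range u)).map (algebraMap _ A)) :
    D x ∈ (Ideal.span (Set.range u)).map (algebraMap _ A) := by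
  obtain ⟨s, hs, hsx⟩ :=
    (IsLocalization.algebraMap_mem_map_algebraMap_iff p.primeCompl A _ _).1 hx
  have key (z) (hz : z ∈ Ideal.span (Set.range u)) :
      D z ∈ (Ideal.span (Set.range u)).map (algebraMap _ A) := by
    change z ∈ Submodule.span _ _ at hz
    induction hz using Submodule.span_induction with
    | mem z hz => obtain ⟨i, rfl⟩ := hz; simp [hD]
    | zero => simp
    | add x y _ _ hx hy => rw [map_add]; exact add_mem hx hy
    | smul a x hx' hx =>
      rw [smul_eq_mul, Derivation.leibniz, Algebra.smul_def, Algebra.smul_def]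
      exact add_mem (Ideal.mul_mem_left _ _ hx)
        (Ideal.mul_mem_right _ _ (Ideal.mem_map_of_mem _ hx'))
  have h1 := key _ hsx
  rw [Derivation.leibniz, Algebra.smul_def, Algebra.smul_def] at h1
  have h2 := (Ideal.add_mem_iff_left _ (Ideal.mul_mem_right (D s) _ hx)).1 h1
  exact (Ideal.unit_mul_mem_iff_mem _ (IsLocalization.map_units A (⟨s, hs⟩ : p.primeCompl))).1 h2

/-- Let `A` be the localization of a polynomial ring at `p`, and `S = A / hA`. If `y` maps to a
regular sequence generating the maximal ideal of `S`, then some derivation preserving `h` sends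
`∑ aᵢ yᵢ` outside `p`, unless all `aᵢ` lie in `p`. -/
theorem MvPolynomial.exists_preservesIdeal_notMem {k σ A S : Type*} [CommRing k]
    [IsNoetherianRing k] [Finite σ] [CommRing A] [IsLocalRing A] [IsNoetherianRing A]
    [Algebra k A] [Algebra (MvPolynomial σ k) A] [IsScalarTower k (MvPolynomial σ k) A]
    [Algebra.FormallySmooth k (ResidueField A)]
    (p : Ideal (MvPolynomial σ k)) [p.IsPrime] [IsLocalization.AtPrime A p]
    (h : Ideal (MvPolynomial σ k)) [CommRing S] [IsLocalRing S] [Algebra A S]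
    (hsurj : Function.Surjective (algebraMap A S))
    (hker : RingHom.ker (algebraMap A S) = h.map (algebraMap _ A))
    {r : ℕ} (y : Fin r → MvPolynomial σ k)
    (hyreg : RingTheory.Sequence.IsWeaklyRegular S
      (List.ofFn fun j => algebraMap A S (algebraMap _ A (y j))))
    (hspan : Ideal.span (Set.range fun j => algebraMap A S (algebraMap _ A (y j))) =
      maximalIdeal S)
    (a : Fin r → MvPolynomial σ k) {j : Fin r} (ha : a j ∉ p) :
    ∃ ξ : Derivation k (MvPolynomial σ k) (MvPolynomial σ k), PreservesIdeal h ξ ∧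
      ξ (∑ i, a i * y i) ∉ p := by
  classical
  let O := MvPolynomial σ k
  let m := maximalIdeal A
  have hloc (x : A) : algebraMap A S x ∈ maximalIdeal S ↔ x ∈ m := by
    have : IsLocalHom (algebraMap A S) := .of_surjective _ hsurj
    exact (map_mem_nonunits_iff (algebraMap A S) x)
  have hpm (x : O) : algebraMap O A x ∈ m ↔ x ∈ p :=
    IsLocalization.AtPrime.to_map_mem_maximal_iff A p x
  have hym (i) : algebraMap O A (y i) ∈ m :=
    (hloc _).1 (hspan ▸ Ideal.subset_span ⟨i, rfl⟩)
  let I : Ideal A := h.map (algebraMap O A)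
  have hIm : I ≤ m := by
    rw [← show RingHom.ker (algebraMap A S) = I from hker]
    intro x hx
    exact (hloc x).1 (by rw [(RingHom.mem_ker).1 hx]; exact zero_mem _)
  have hhm (x : O) (hx : x ∈ h) : algebraMap O A x ∈ m := hIm (Ideal.mem_map_of_mem _ hx)
  let H : Set (CotangentSpace A) := Set.range fun x : h => m.toCotangent ⟨_, hhm x x.2⟩
  obtain ⟨b, hbH, hbspan, hbli⟩ := exists_linearIndependent (ResidueField A) H
  have : Finite b := hbli.setFinite
  choose u' hu' using fun v : b => hbH v.2
  let u : b → O := fun v => u' v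
  have huh (v) : u v ∈ h := (u' v).2
  have huv (v) : m.toCotangent ⟨_, hhm _ (huh v)⟩ = (v : CotangentSpace A) := hu' v
  let f : O := ∑ i, a i * y i
  have hfm : algebraMap O A f ∈ m := by
    simp only [f, map_sum, map_mul]
    exact Ideal.sum_mem _ fun i _ => Ideal.mul_mem_left _ _ (hym i)
  have hrange : (Set.range fun v => m.toCotangent ⟨_, hhm _ (huh v)⟩) = b :=
    (congrArg Set.range (_root_.funext huv)).trans Subtype.range_coe
  have hfu : m.toCotangent ⟨_, hfm⟩ ∉ Submodule.span (ResidueField A)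
      (Set.range fun v => m.toCotangent ⟨_, hhm _ (huh v)⟩) := by
    rw [hrange, hbspan]
    intro hmem
    obtain ⟨x, hxI, hx⟩ := exists_mem_toCotangent_eq_of_mem_span I H (by
      rintro _ ⟨x, rfl⟩
      exact ⟨_, Ideal.mem_map_of_mem _ x.2, rfl⟩) _ hmem
    rw [Ideal.toCotangent_eq] at hx
    have h1 : algebraMap A S (x - algebraMap O A f) ∈ maximalIdeal S ^ 2 := by
      refine Ideal.pow_right_mono ?_ 2 (Ideal.map_pow (algebraMap A S) m 2 ▸
        Ideal.mem_map_of_mem (algebraMap A S) hx)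
      exact Ideal.map_le_iff_le_comap.2 fun z hz => (hloc z).2 hz
    have h2 : algebraMap A S x = 0 := by
      rw [← RingHom.mem_ker, hker]
      exact hxI
    rw [map_sub, h2, zero_sub, neg_mem_iff] at h1
    simp only [f, map_sum, map_mul] at h1
    exact ha ((hpm _).1 ((hloc _).1
      (mem_maximalIdeal_of_sum_mul_mem_sq _ hyreg hspan
        (fun i => algebraMap A S (algebraMap O A (a i))) h1 j)))
  obtain ⟨D, hDu, hDf⟩ := MvPolynomial.exists_derivation_eq_zero u (fun v => hhm _ (huh v))
    (by convert hbli using 1; exact _root_.funext huv) f hfm hfu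
  let U : Ideal A := (Ideal.span (Set.range u)).map (algebraMap O A)
  have hUI : U ≤ I := Ideal.map_mono (Ideal.span_le.2 (by rintro _ ⟨v, rfl⟩; exact huh v))
  let ys : List A := List.ofFn fun i => algebraMap O A (y i)
  have hmI : m ≤ I ⊔ Ideal.ofList ys := by
    intro x hx
    have hys : (Ideal.ofList ys).map (algebraMap A S) = maximalIdeal S := by
      rw [← hspan, Ideal.map_ofList, List.map_ofFn]
      exact congrArg Ideal.span (Set.ext fun z => List.mem_ofFn)
    obtain ⟨z, hz, hzx⟩ := (Ideal.mem_map_iff_of_surjective _ hsurj).1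
      (hys.symm ▸ (hloc x).2 hx : algebraMap A S x ∈ (Ideal.ofList ys).map (algebraMap A S))
    rw [← sub_add_cancel x z]
    refine Submodule.add_mem_sup (hker.le ?_) hz
    rw [RingHom.mem_ker, map_sub, hzx, sub_self]
  have hIU : I ≤ U ⊔ m • m := by
    refine Ideal.map_le_iff_le_comap.2 fun x hx => ?_
    have hxb : m.toCotangent ⟨_, hhm x hx⟩ ∈ Submodule.span (ResidueField A) b := by
      rw [hbspan]
      exact Submodule.subset_span ⟨⟨x, hx⟩, rfl⟩
    obtain ⟨z, hzU, hz⟩ := exists_mem_toCotangent_eq_of_mem_span U b (fun v hv =>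
      ⟨⟨_, hhm _ (huh ⟨v, hv⟩)⟩, Ideal.mem_map_of_mem _ (Ideal.subset_span (Set.mem_range_self _)),
        huv ⟨v, hv⟩⟩)
      _ hxb
    rw [eq_comm, Ideal.toCotangent_eq, pow_two, ← smul_eq_mul] at hz
    rw [Ideal.mem_comap, ← add_sub_cancel (z : A) (algebraMap O A x)]
    exact Submodule.add_mem_sup hzU hz
  have hmU : m ≤ U ⊔ Ideal.ofList ys := by
    refine Submodule.le_of_le_smul_of_le_jacobson_bot (IsNoetherian.noetherian _)
      (maximalIdeal_le_jacobson ⊥) (hmI.trans (sup_le (hIU.trans ?_) ?_))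
    · exact sup_le_sup_right le_sup_left _
    · exact le_sup_right.trans le_sup_left
  have hIU' : I ≤ U := by
    have hk : LinearMap.ker (Algebra.linearMap A S) = I := hker
    rw [← hk]
    refine ker_le_of_isWeaklyRegular ys ?_ (Algebra.linearMap A S) hsurj (hk.trans_le hIm) ?_ U
      (hUI.trans_eq hk.symm) hmU
    · intro z hz
      obtain ⟨i, rfl⟩ := List.mem_ofFn.1 hz
      exact hym i
    · rw [← RingTheory.Sequence.isWeaklyRegular_map_algebraMap_iff S, List.map_ofFn]
      exact hyreg
  obtain ⟨ξ, hξ, s, hs, hξs⟩ := MvPolynomial.exists_preservesIdeal p h D fun x hx =>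
    hUI (MvPolynomial.derivation_mem_map_of_mem_map_span p u D hDu x
      (hIU' (Ideal.mem_map_of_mem _ hx)))
  refine ⟨ξ, hξ, fun hmem => hDf ?_⟩
  have h3 := (hpm _).2 hmem
  rw [hξs] at h3
  exact (Ideal.unit_mul_mem_iff_mem _ (IsLocalization.map_units A (⟨s, hs⟩ : p.primeCompl))).1 h3
end

/-- If every derivation preserving `h` maps `∑ aᵢ g_{t+i}` into a minimal prime `p` of `g`, then all
`aᵢ` lie in `p`. -/
theorem mem_of_forall_preservesIdeal {k σ : Type*} [Field k] [CharZero k] [Finite σ]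
    (h g p : Ideal (MvPolynomial σ k)) (hle : h ≤ g) (hrad : g.IsRadical)
    (hp : p ∈ g.minimalPrimes) {n : ℕ} (gs : Fin n → MvPolynomial σ k) (t : ℕ)
    (hci : generatesAsCI h g gs t p) (a : Fin (n - t) → MvPolynomial σ k)
    (ha : ∀ ξ : Derivation k (MvPolynomial σ k) (MvPolynomial σ k), PreservesIdeal h ξ →
      ξ (∑ i, a i * tailFam gs t i) ∈ p) (j : Fin (n - t)) : a j ∈ p := by
  have hpp : p.IsPrime := hp.1.1
  have hhp : h ≤ p := hle.trans hp.1.2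
  have hmk : Function.Surjective (Ideal.Quotient.mk h) := Ideal.Quotient.mk_surjective
  have hkerp : RingHom.ker (Ideal.Quotient.mk h) ≤ p := by rwa [Ideal.mk_ker]
  let q := p.map (Ideal.Quotient.mk h)
  have hq : q.IsPrime := Ideal.map_isPrime_of_surjective hmk hkerp
  have hqp : p = q.comap (Ideal.Quotient.mk h) := by
    rw [Ideal.comap_map_of_surjective' _ hmk, sup_eq_left.2 hkerp]
  let A := Localization.AtPrime p
  let S := Localization.AtPrime q
  let φ : A →+* S := Localization.localRingHom p q (Ideal.Quotient.mk h) hqp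
  have hφ (x) : φ (algebraMap _ A x) = algebraMap _ S (Ideal.Quotient.mk h x) :=
    Localization.localRingHom_to_map ..
  let : Algebra A S := φ.toAlgebra
  have hsurj : Function.Surjective (algebraMap A S) :=
    (RingHom.surjectiveOnStalks_of_surjective hmk).localRingHom_surjective p q hqp
  have hker : RingHom.ker (algebraMap A S) = h.map (algebraMap _ A) := by
    have hT : p.primeCompl.map (Ideal.Quotient.mk h) = q.primeCompl := by
      ext x
      obtain ⟨x, rfl⟩ := hmk x
      constructor
      · rintro ⟨z, hz, hzx⟩
        rw [← hzx]
        exact fun hzq => hz (hqp ▸ hzq : z ∈ p)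
      · exact fun hx => ⟨x, fun hxp => hx (Ideal.mem_map_of_mem _ hxp), rfl⟩
    exact (IsLocalization.ker_map (S := A) S (Ideal.Quotient.mk h) hT).trans (by rw [Ideal.mk_ker])
  obtain ⟨hyreg, hyspan⟩ := hci hq
  have hgS : (g.map (Ideal.Quotient.mk h)).map (algebraMap _ S) = IsLocalRing.maximalIdeal S := by
    have hgq : g.map (Ideal.Quotient.mk h) ≤ q := Ideal.map_mono hp.1.2
    rw [← IsLocalization.AtPrime.map_eq_maximalIdeal q S]
    refine le_antisymm (Ideal.map_mono hgq) ?_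
    rw [Ideal.map_map, Ideal.map_map]
    refine Ideal.map_le_iff_le_comap.2 fun x hx => ?_
    have hxr : algebraMap _ A x ∈ (g.map (algebraMap _ A)).radical := by
      rw [IsLocalization.AtPrime.radical_map_of_mem_minimalPrimes A p g hp]
      exact Ideal.mem_map_of_mem _ hx
    obtain ⟨N, hN⟩ := hxr
    rw [← map_pow] at hN
    obtain ⟨s, hs, hsx⟩ :=
      (IsLocalization.algebraMap_mem_map_algebraMap_iff p.primeCompl A g _).1 hN
    have hsxg : s * x ∈ g := hrad ⟨N + 1, by
      rw [show (s * x) ^ (N + 1) = s ^ N * x * (s * x ^ N) by ring]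
      exact Ideal.mul_mem_left _ _ hsx⟩
    have hunit : IsUnit (algebraMap _ S (Ideal.Quotient.mk h s)) :=
      IsLocalization.map_units S (⟨_, fun hsq => hs (hqp ▸ hsq : s ∈ p)⟩ : q.primeCompl)
    rw [Ideal.mem_comap, ← Ideal.unit_mul_mem_iff_mem _ hunit]
    simpa using Ideal.mem_map_of_mem ((algebraMap _ S).comp (Ideal.Quotient.mk h)) hsxg
  have : Algebra.EssFiniteType k A := .comp _ (MvPolynomial σ k) _
  have : Algebra.EssFiniteType k (IsLocalRing.ResidueField A) := .comp _ A _
  by_contra haj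
  obtain ⟨ξ, hξ, hξp⟩ := MvPolynomial.exists_preservesIdeal_notMem (A := A) (S := S) p h hsurj hker
    (tailFam gs t) (by simpa only [RingHom.algebraMap_toAlgebra, hφ] using hyreg.toIsWeaklyRegular)
    (by simpa only [RingHom.algebraMap_toAlgebra, hφ] using hyspan.trans hgS) a haj
  exact hξp (ha ξ hξ)

theorem torsionSet_subset_primitiveIdeal (k : Type*) {O : Type*} [CommRing k] [CommRing O]
    [Algebra k O] (h g : Ideal O) (hle : h ≤ g) : torsionSet h g ⊆ primitiveIdeal k h g := by
  rintro f ⟨hfg, β, hβ, hβf⟩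
  refine ⟨hfg, fun ξ hξ => ?_⟩
  have hsq (x) (hx : x ∈ g ^ 2) : ξ x ∈ g := by
    rw [pow_two] at hx
    induction hx using Submodule.mul_induction_on' with
    | mem_mul_mem a ha b hb =>
      rw [Derivation.leibniz]
      exact add_mem (Ideal.mul_mem_right _ _ ha) (Ideal.mul_mem_right _ _ hb)
    | add x _ y _ hx hy => rw [map_add]; exact add_mem hx hy
  have h1 : ξ (β * f) ∈ g := by
    obtain ⟨x, hx, y, hy, hxy⟩ := Submodule.mem_sup.1 hβf
    rw [← hxy, map_add]
    exact add_mem (hsq x hx) (hle (hξ y hy))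
  rw [Derivation.leibniz, smul_eq_mul, smul_eq_mul] at h1
  have h2 := (Ideal.add_mem_iff_left _ (Ideal.mul_mem_right (ξ β) _ hfg)).1 h1
  rw [← Ideal.Quotient.eq_zero_iff_mem] at h2 ⊢
  rw [map_mul] at h2
  exact (mul_left_mem_nonZeroDivisors_eq_zero_iff hβ).1 h2

theorem span_range_eq_sup_tailFam {O : Type*} [CommRing O] {n t : ℕ} (htn : t ≤ n)
    (gs : Fin n → O) : Ideal.span (Set.range gs) =
      Ideal.span (Set.range fun j : Fin t => gs (Fin.castLE htn j)) ⊔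
        Ideal.span (Set.range (tailFam gs t)) := by
  rw [← Ideal.span_union]
  congr 1
  ext x
  constructor
  · rintro ⟨i, rfl⟩
    rcases lt_or_ge (i : ℕ) t with hi | hi
    · exact Or.inl ⟨⟨i, hi⟩, rfl⟩
    · exact Or.inr ⟨⟨i - t, by omega⟩, by simp [tailFam, Nat.add_sub_cancel' hi]⟩
  · rintro (⟨j, rfl⟩ | ⟨j, rfl⟩)
    exacts [⟨_, rfl⟩, ⟨_, rfl⟩]

/-- Under the conditions of Proposition `basic`, the primitive ideal is
`∫_h g = (g₁, …, g_t) + (g_{t+1}, …, gₙ)²`. -/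
theorem statement7 {k : Type*} [Field k] [CharZero k] {m : ℕ}
    (h g : Ideal (MvPolynomial (Fin m) k)) (hle : h ≤ g)
    (hh : IsUnmixed h) (hrad : g.IsRadical)
    {n : ℕ} (gs : Fin n → MvPolynomial (Fin m) k)
    (hregseq : RingTheory.Sequence.IsRegular (MvPolynomial (Fin m) k) (List.ofFn gs))
    (hgen : g = Ideal.span (Set.range gs))
    (hreg : ∀ p ∈ g.minimalPrimes, regularAtImage h p)
    (t : ℕ) (htn : t ≤ n)
    (h1 : ∀ i : Fin n, (i : ℕ) < t → gs i ∈ torsionSet h g)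
    (h2 : ∀ p ∈ associatedPrimes (MvPolynomial (Fin m) k) (MvPolynomial (Fin m) k ⧸ g),
      generatesAsCI h g gs t p) :
    primitiveIdeal k h g =
      Ideal.span (Set.range fun j : Fin t => gs (Fin.castLE htn j)) ⊔
        (Ideal.span (Set.range (tailFam gs t))) ^ 2 := by
  have hsup : g = _ := hgen.trans (span_range_eq_sup_tailFam htn gs)
  set G₁ := Ideal.span (Set.range fun j : Fin t => gs (Fin.castLE htn j))
  set G₂ := Ideal.span (Set.range (tailFam gs t))
  have hG₂g : G₂ ≤ g := le_sup_right.trans_eq hsup.symm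
  have hG₁ : G₁ ≤ primitiveIdeal k h g := Ideal.span_le.2 <| by
    rintro _ ⟨j, rfl⟩
    exact torsionSet_subset_primitiveIdeal k h g hle (h1 _ j.2)
  refine le_antisymm (fun f hf => ?_) (sup_le hG₁ fun x hx => ?_)
  · obtain ⟨f₁, hf₁, f₂, hf₂, rfl⟩ := Submodule.mem_sup.1 (hsup.le hf.1)
    refine Ideal.add_mem _ (Ideal.mem_sup_left hf₁) ?_
    have hf₂' : f₂ ∈ primitiveIdeal k h g := (Ideal.add_mem_iff_right _ (hG₁ hf₁)).1 hf
    obtain ⟨a, rfl⟩ := Ideal.mem_span_range_iff_exists_fun.1 hf₂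
    have ha (j) : a j ∈ g := by
      rw [← hrad.radical, ← Ideal.sInf_minimalPrimes, Submodule.mem_sInf]
      intro p hp
      refine mem_of_forall_preservesIdeal h g p hle hrad hp gs t (h2 p ?_) a
        (fun ξ hξ => hp.1.2 (hf₂'.2 ξ hξ)) j
      refine Module.associatedPrimes.minimalPrimes_annihilator_subset_associatedPrimes _ _ ?_
      rwa [Ideal.annihilator_quotient]
    refine Ideal.sum_mem _ fun j _ => ?_
    have hj : tailFam gs t j ∈ G₂ := Ideal.subset_span ⟨j, rfl⟩
    obtain ⟨b, hb, c, hc, hbc⟩ := Submodule.mem_sup.1 (hsup.le (ha j))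
    rw [← hbc, add_mul, pow_two]
    exact Submodule.add_mem_sup (Ideal.mul_mem_right _ _ hb) (Ideal.mul_mem_mul hc hj)
  · exact torsionSet_subset_primitiveIdeal k h g hle ⟨hG₂g (Ideal.pow_le_self two_ne_zero hx), 1,
      by simp, by rw [one_mul]; exact Ideal.mem_sup_left (Ideal.pow_right_mono hG₂g 2 hx)⟩
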